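/- Let L be a prime with L ≡ 3 (mod 4) and let ā : ZMod L → {0,1} be defined by ā(i) = 1 if i ≠ 0 and i is a quadratic residue modulo L, and ā(i) = 0 otherwise. Then for every integer s ≥ 3, all distinct i₁, …, i_s ∈ ZMod L and all bits b₁, …, b_s ∈ {0,1}, the pattern count d_{i₁,…,i_s}(b₁,…,b_s) = #{ j ∈ ZMod L : ā(j + i_t) = b_t for all t = 1,…,s } satisfies | d_{i₁,…,i_s}(b₁,…,b_s) − L/2^s | ≤ W(s), where W(s) = ( √L·(2^{s−1}(s−3) + 2) + 2^{s−1}(s+1) − 1 ) / 2^s. -/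

import Mathlib

/-- The Legendre-sequence predicate: `legSeq L i` holds iff `i` is a nonzero quadratic
residue modulo `L`; the binary sequence `ā` takes value `1` exactly where this holds. -/
def legSeq (L : ℕ) (i : ZMod L) : Prop := i ≠ 0 ∧ IsSquare i

/-- The bound `W(s) = (√L·(2^{s−1}(s−3)+2) + 2^{s−1}(s+1) − 1)/2^s`. -/
noncomputable def legBound (L : ℕ) (s : ℕ) : ℝ :=
  (Real.sqrt L * (2 ^ (s - 1) * ((s : ℝ) - 3) + 2) + 2 ^ (s - 1) * ((s : ℝ) + 1) - 1) / 2 ^ s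

/-!
Expanding `∏ t, (1 + ε t * χ (j + i t))` with signs `ε t = ±1`, and accounting for the at most one
vanishing argument for each `j`, reduces the pattern count to Weil's bound for the sums
`∑ c, ∏ a ∈ A, χ (c + a)` of the quadratic character `χ` of a field with `q` elements.

For `#A` odd, such a sum is the coefficient of `T` in an `L`-polynomial of degree less than `#A`.
Newton's identities express its coefficients through those of its logarithmic derivative, and the
coefficient of `T ^ n` in the latter is a character sum over the extension of degree `n`. Stepanov's
method bounds these sums by `O(q ^ (n / 2))` for even `n`. Hence the poles of the logarithmic
derivative lie outside the disc of radius `1 / √q`, that is, the reciprocal roots of the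
`L`-polynomial have absolute value at most `√q`; the sum is minus the sum of these roots.

For `#A` even, translate one element of `A` to `0`; the substitution `c ↦ c⁻¹` then removes a factor
and leaves an odd number of them.
-/

open Finset Polynomial

section Stepanov

variable {K : Type*} [Field K]

lemma linearIndependent_of_injective_natDegree {ι : Type*} {e : ι → K[X]} (he : ∀ t, e t ≠ 0)
    (hinj : Function.Injective fun t ↦ (e t).natDegree) : LinearIndependent K e := by
  rw [linearIndependent_iff']
  intro s w hw t ht
  by_contra hwt
  have hdisj : Set.Pairwise {t | t ∈ s ∧ w t • e t ≠ 0}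
      (Function.onFun Ne (degree ∘ fun t ↦ w t • e t)) := by
    rintro t ⟨-, ht⟩ u ⟨-, hu⟩ htu hdeg
    have hwt : w t ≠ 0 := fun h ↦ ht (by rw [h, zero_smul])
    have hwu : w u ≠ 0 := fun h ↦ hu (by rw [h, zero_smul])
    simp only [Function.comp, smul_eq_C_mul, degree_C_mul hwt, degree_C_mul hwu] at hdeg
    exact htu (hinj (natDegree_eq_of_degree_eq hdeg))
  have hsup := degree_sum_eq_of_disjoint _ s hdisj
  rw [hw, degree_zero, eq_comm, Finset.sup_eq_bot_iff] at hsup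
  exact smul_ne_zero hwt (he t) (degree_eq_bot.mp (hsup t ht))

lemma card_le_of_linearIndependent_of_natDegree_lt {ι : Type*} [Fintype ι] {N : ℕ} {g : ι → K[X]}
    (hg : LinearIndependent K g) (hN : ∀ t, (g t).natDegree < N) : Fintype.card ι ≤ N := by
  have hspan : Submodule.span K (Set.range g) ≤ degreeLT K N := by
    rw [Submodule.span_le]
    rintro _ ⟨t, rfl⟩
    exact mem_degreeLT.mpr (degree_le_natDegree.trans_lt (by exact_mod_cast hN t))
  calc Fintype.card ι = Module.finrank K (Submodule.span K (Set.range g)) :=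
        (finrank_span_eq_card hg).symm
    _ ≤ Module.finrank K (degreeLT K N) := Submodule.finrank_mono hspan
    _ = N := by rw [(degreeLTEquiv K N).finrank_eq, Module.finrank_fin_fun]

lemma sum_pow_of_dvd_card [Fintype K] {Q : ℕ} (hQ : Q ∣ Fintype.card K) {ι : Type*}
    (s : Finset ι) (g : ι → K) : (∑ t ∈ s, g t) ^ Q = ∑ t ∈ s, g t ^ Q := by
  obtain ⟨n, hp, hn⟩ := FiniteField.card K (ringChar K)
  obtain ⟨e, -, rfl⟩ := (Nat.dvd_prime_pow hp).mp (hn ▸ hQ)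
  have : ExpChar K (ringChar K) := .prime hp
  exact sum_pow_char_pow _ _ s g

/-- The exponents `(b, j, i)` of the monomials `X ^ (i + Q * j) * f ^ (H * b)` from which Stepanov's
auxiliary polynomial is assembled. -/
abbrev StepanovIndex (J D : ℕ) : Type := Fin 2 × Fin J × Fin D

/-- The building blocks of Stepanov's auxiliary polynomial over a field with `Q ^ 2` elements, where
`2 * H = Q + 1`. -/
noncomputable def stepanovMonomial (Q H : ℕ) (f : K[X]) {J D : ℕ} (t : StepanovIndex J D) : K[X] :=
  X ^ ((t.2.2 : ℕ) + Q * t.2.1) * f ^ (H * t.1)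

/-- A polynomial of low degree which agrees with the `Q`-th power of `stepanovMonomial Q H f t` at
every point `x` with `f(x) ^ (Q * H) = a * f(x) ^ H`. -/
noncomputable def stepanovReduction (Q H : ℕ) (f : K[X]) (a : K) {J D : ℕ}
    (t : StepanovIndex J D) : K[X] :=
  C (a ^ (t.1 : ℕ)) * (X ^ (Q * (t.2.2 : ℕ) + t.2.1) * f ^ (H * t.1))

variable {Q H J D : ℕ} {f : K[X]}

lemma natDegree_X_pow_mul_pow (hf : f ≠ 0) (n k : ℕ) :
    (X ^ n * f ^ k).natDegree = n + f.natDegree * k := by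
  rw [natDegree_mul (pow_ne_zero _ X_ne_zero) (pow_ne_zero _ hf), natDegree_X_pow, natDegree_pow,
    mul_comm]

lemma natDegree_stepanovMonomial (hf : f ≠ 0) (t : StepanovIndex J D) :
    (stepanovMonomial Q H f t).natDegree = t.2.2 + Q * t.2.1 + f.natDegree * (H * t.1) :=
  natDegree_X_pow_mul_pow hf _ _

lemma natDegree_stepanovMonomial_le (hf : f ≠ 0) (t : StepanovIndex J D) :
    (stepanovMonomial Q H f t).natDegree ≤ D + Q * J + f.natDegree * H := by
  rw [natDegree_stepanovMonomial hf]
  gcongr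
  · exact t.2.2.2.le
  · exact t.2.1.2.le
  · exact mul_le_of_le_one_right' (Nat.lt_succ_iff.mp t.1.2)

lemma natDegree_stepanovReduction_lt (hf : f ≠ 0) (a : K) (t : StepanovIndex J D) :
    (stepanovReduction Q H f a t).natDegree < Q * D + f.natDegree * H + J := by
  refine (natDegree_C_mul_le _ _).trans_lt ?_
  rw [natDegree_X_pow_mul_pow hf, add_right_comm]
  refine add_lt_add_of_le_of_lt ?_ t.2.1.2
  gcongr
  · exact t.2.2.2.le
  · exact mul_le_of_le_one_right' (Nat.lt_succ_iff.mp t.1.2)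

/- Doubling the degree gives the base-`Q` digits `2 * i + m * b` and `2 * j + m * b`, where
`m = f.natDegree`; as `m` is odd, the parity of a digit recovers `b`. -/
lemma linearIndependent_stepanovMonomial (hf : Odd f.natDegree) (hH : 2 * H = Q + 1)
    (hD : 2 * D + f.natDegree = Q) :
    LinearIndependent K (stepanovMonomial Q H f : StepanovIndex J D → K[X]) := by
  have hf0 : f ≠ 0 := by
    rintro rfl
    simp at hf
  refine linearIndependent_of_injective_natDegree
    (fun t ↦ mul_ne_zero (pow_ne_zero _ X_ne_zero) (pow_ne_zero _ hf0)) fun t u htu ↦ ?_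
  simp only [natDegree_stepanovMonomial hf0] at htu
  set m := f.natDegree
  have hdouble (t : StepanovIndex J D) : 2 * (t.2.2 + Q * t.2.1 + m * (H * t.1)) =
      2 * t.2.2 + m * t.1 + Q * (2 * t.2.1 + m * t.1) := by
    linear_combination m * (t.1 : ℕ) * hH
  have hdigit (t : StepanovIndex J D) : 2 * t.2.2 + m * t.1 < Q := by
    have := mul_le_of_le_one_right' (a := m) (Nat.lt_succ_iff.mp t.1.2)
    grind
  have hQ : 0 < Q := (Nat.zero_le _).trans_lt (hdigit t)
  have hdigits := (hdouble t).symm.trans ((congrArg (2 * ·) htu).trans (hdouble u))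
  have hlow : 2 * (t.2.2 : ℕ) + m * t.1 = 2 * u.2.2 + m * u.1 := by
    have := congrArg (· % Q) hdigits
    simpa only [Nat.add_mul_mod_self_left, Nat.mod_eq_of_lt (hdigit _)] using this
  have hhigh : 2 * (t.2.1 : ℕ) + m * t.1 = 2 * u.2.1 + m * u.1 := by
    rw [hlow] at hdigits
    exact Nat.eq_of_mul_eq_mul_left hQ (Nat.add_left_cancel hdigits)
  have hb : t.1 = u.1 := by
    obtain ⟨k, hk⟩ := hf
    rw [hk] at hlow
    grind
  rw [hb] at hlow hhigh
  exact Prod.ext hb (Prod.ext (Fin.ext (by omega)) (Fin.ext (by omega)))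

variable [Fintype K]

lemma eval_stepanovMonomial_pow (hK : Fintype.card K = Q ^ 2) {a x : K}
    (hx : f.eval x ^ (Q * H) = a * f.eval x ^ H) (t : StepanovIndex J D) :
    (stepanovMonomial Q H f t).eval x ^ Q = (stepanovReduction Q H f a t).eval x := by
  have hxQ (j : ℕ) : x ^ (Q * j * Q) = x ^ j := by
    rw [mul_right_comm, ← sq, pow_mul, ← hK, FiniteField.pow_card]
  have hfx : f.eval x ^ (H * (t.1 : ℕ) * Q) = a ^ (t.1 : ℕ) * f.eval x ^ (H * t.1) := by
    rw [mul_right_comm, mul_comm H Q, pow_mul, hx, mul_pow, ← pow_mul]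
  simp only [stepanovMonomial, stepanovReduction, eval_mul, eval_C, eval_pow, eval_X, mul_pow,
    ← pow_mul, pow_add, hxQ, hfx]
  ring

lemma exists_stepanov_auxiliary (hK : Fintype.card K = Q ^ 2) (hf : Odd f.natDegree)
    (hH : 2 * H = Q + 1) (hD : 2 * D + f.natDegree = Q)
    (hcard : Q * D + f.natDegree * H + J < 2 * (J * D)) (a : K) :
    ∃ R : K[X], R ≠ 0 ∧ R.natDegree ≤ D + Q * J + f.natDegree * H ∧
      ∀ x, f.eval x ^ (Q * H) = a * f.eval x ^ H → R.eval x = 0 := by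
  have hf0 : f ≠ 0 := by
    rintro rfl
    simp at hf
  have hQ0 : Q ≠ 0 := by
    have := hf.pos
    omega
  have hdep : ¬LinearIndependent K (stepanovReduction Q H f a : StepanovIndex J D → K[X]) :=
    fun h ↦ hcard.not_ge <| by
      simpa using card_le_of_linearIndependent_of_natDegree_lt h
        (natDegree_stepanovReduction_lt hf0 a)
  obtain ⟨w, hw, t₀, ht₀⟩ := Fintype.not_linearIndependent_iff.mp hdep
  refine ⟨∑ t, w t ^ Q • stepanovMonomial Q H f t, fun hR ↦ ht₀ ?_, ?_, fun x hx ↦ ?_⟩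
  · exact pow_eq_zero_iff hQ0 |>.mp <| Fintype.linearIndependent_iff.mp
      (linearIndependent_stepanovMonomial hf hH hD) (fun t ↦ w t ^ Q) hR t₀
  · exact natDegree_sum_le_of_forall_le _ _ fun t _ ↦
      (natDegree_smul_le _ _).trans (natDegree_stepanovMonomial_le hf0 t)
  · have hwQ (t : StepanovIndex J D) : (w t ^ Q) ^ Q = w t := by
      rw [← pow_mul, ← sq, ← hK, FiniteField.pow_card]
    refine pow_eq_zero_iff hQ0 |>.mp ?_
    calc (∑ t, w t ^ Q • stepanovMonomial Q H f t).eval x ^ Q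
        = (∑ t, w t • stepanovReduction Q H f a t).eval x := by
          simp only [eval_finsetSum, eval_smul, smul_eq_mul,
            sum_pow_of_dvd_card (hK ▸ dvd_pow_self Q two_ne_zero), mul_pow, hwQ,
            eval_stepanovMonomial_pow hK hx]
      _ = 0 := by rw [hw, eval_zero]

variable [DecidableEq K]

theorem two_mul_card_eval_pow_eq_le (hK : Fintype.card K = Q ^ 2) (hf : Odd f.natDegree)
    (hfQ : 2 * f.natDegree + 2 ≤ Q) (hH : 2 * H = Q + 1) (a : K) :
    2 * #{x | f.eval x ^ (Q * H) = a * f.eval x ^ H} ≤ Q ^ 2 + (3 * f.natDegree + 4) * Q := by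
  set m := f.natDegree
  obtain ⟨D, hD⟩ : ∃ D, 2 * D + m = Q := ⟨(Q - m) / 2, by grind⟩
  have hJD : Q * D + m * H + (H + m + 1) < 2 * ((H + m + 1) * D) := by
    nlinarith
  obtain ⟨R, hR0, hRdeg, hRroot⟩ := exists_stepanov_auxiliary hK hf hH hD hJD a
  have hcard : #{x | f.eval x ^ (Q * H) = a * f.eval x ^ H} ≤ R.natDegree :=
    card_le_degree_of_subset_roots fun x hx ↦
      (mem_roots hR0).mpr (hRroot x (Finset.mem_filter.mp hx).2)
  have hdouble : 2 * (D + Q * (H + m + 1) + m * H) = Q ^ 2 + (3 * m + 4) * Q := by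
    linear_combination hD + (Q + m) * hH
  grind

lemma pow_mul_eq_quadraticChar_mul_pow (hK : Fintype.card K = Q ^ 2) (hH : 2 * H = Q + 1) (y : K) :
    y ^ (Q * H) = quadraticChar K y * y ^ H := by
  have hodd : Odd Q := ⟨H - 1, by grind⟩
  have hchar : ringChar K ≠ 2 := fun h ↦ by
    have := FiniteField.even_card_iff_char_two.mp h
    have := hodd.pow (n := 2)
    grind
  have hexp : Q * H = Fintype.card K / 2 + H := by
    obtain ⟨k, rfl⟩ := hodd
    obtain rfl : H = k + 1 := by omega
    rw [hK, show (2 * k + 1) ^ 2 = 2 * (2 * k ^ 2 + 2 * k) + 1 by ring]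
    grind
  rw [hexp, pow_add, quadraticChar_eq_pow_of_char_ne_two' hchar]

theorem abs_sum_quadraticChar_eval_le (hK : Fintype.card K = Q ^ 2) (hQ : Odd Q)
    (hf : Odd f.natDegree) :
    |∑ x, quadraticChar K (f.eval x)| ≤ (3 * f.natDegree + 4) * (Q : ℤ) := by
  have hχ (y : K) : quadraticChar K y = 0 ∨ quadraticChar K y = 1 ∨ quadraticChar K y = -1 :=
    quadraticChar_isQuadratic K y
  have hcard : (Fintype.card K : ℤ) = (Q : ℤ) ^ 2 := by exact_mod_cast hK
  obtain hfQ | hfQ := le_or_gt (2 * f.natDegree + 2) Q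
  · obtain ⟨H, hH⟩ : ∃ H, 2 * H = Q + 1 := ⟨(Q + 1) / 2, by grind⟩
    have hsigned (ε : ℤ) (hε : ε = 1 ∨ ε = -1) :
        ε * ∑ x, quadraticChar K (f.eval x) ≤ (3 * f.natDegree + 4) * (Q : ℤ) := by
      have hstepanov := two_mul_card_eval_pow_eq_le hK hf hfQ hH (ε : K)
      have hpoint (x : K) : 1 + ε * quadraticChar K (f.eval x) ≤
          2 * if f.eval x ^ (Q * H) = ε * f.eval x ^ H then 1 else 0 := by
        rw [pow_mul_eq_quadraticChar_mul_pow hK hH]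
        have hH0 : H ≠ 0 := by omega
        obtain h0 | h0 := eq_or_ne (f.eval x) 0
        · simp [h0, hH0]
        · obtain rfl | rfl := hε <;>
            obtain h | h := quadraticChar_dichotomy h0 <;> rw [h] <;> push_cast <;> grind
      have hsum := Finset.sum_le_sum fun x (_ : x ∈ univ) ↦ hpoint x
      rw [sum_add_distrib, ← mul_sum, ← mul_sum, sum_boole, sum_const, card_univ, nsmul_one,
        hcard] at hsum
      zify at hstepanov
      linarith
    exact abs_le'.mpr ⟨by simpa using hsigned 1 (.inl rfl), by simpa using hsigned (-1) (.inr rfl)⟩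
  · calc |∑ x, quadraticChar K (f.eval x)| ≤ ∑ x : K, 1 :=
          (abs_sum_le_sum_abs _ _).trans <| sum_le_sum fun x _ ↦ by
            rcases hχ (f.eval x) with h | h | h <;> simp [h]
      _ = (Q : ℤ) * Q := by rw [sum_const, card_univ, nsmul_one, hcard, sq]
      _ ≤ (3 * f.natDegree + 4) * Q := by
        gcongr
        omega

end Stepanov

section LogDeriv

section CommRing

variable {R : Type*} [CommRing R] {M N : R[X]} {E E' : PowerSeries R}

/-- The power series `E` is the logarithmic derivative `X * M' / M` of the polynomial `M`, written
without division. -/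
def HasLogDeriv (M : R[X]) (E : PowerSeries R) : Prop :=
  ((X * derivative M : R[X]) : PowerSeries R) = E * M

lemma coeff_X_mul_derivative (M : R[X]) (n : ℕ) :
    (X * derivative M).coeff n = n * M.coeff n := by
  cases n with
  | zero => simp
  | succ n => rw [coeff_X_mul, coeff_derivative, mul_comm, Nat.cast_succ]

lemma hasLogDeriv_iff : HasLogDeriv M E ↔
    ∀ n, n * M.coeff n = ∑ k ∈ antidiagonal n, PowerSeries.coeff k.1 E * M.coeff k.2 := by
  simp only [HasLogDeriv, PowerSeries.ext_iff, coeff_coe, coeff_X_mul_derivative,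
    PowerSeries.coeff_mul]

lemma HasLogDeriv.mul (hM : HasLogDeriv M E) (hN : HasLogDeriv N E') :
    HasLogDeriv (M * N) (E + E') := by
  have hleibniz : X * derivative (M * N) = X * derivative M * N + M * (X * derivative N) := by
    rw [derivative_mul]
    ring
  rw [HasLogDeriv, hleibniz, Polynomial.coe_add, Polynomial.coe_mul, Polynomial.coe_mul M, hM, hN,
    Polynomial.coe_mul]
  ring

lemma coeff_comp_neg_X (M : R[X]) (n : ℕ) : (M.comp (-X)).coeff n = (-1) ^ n * M.coeff n := by
  rw [show (-X : R[X]) = C (-1) * X by simp, comp_C_mul_X_coeff, mul_comm]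

lemma HasLogDeriv.comp_neg_X (hM : HasLogDeriv M E) :
    HasLogDeriv (M.comp (-X)) (PowerSeries.rescale (-1) E) := by
  rw [hasLogDeriv_iff] at hM ⊢
  intro n
  simp only [coeff_comp_neg_X, PowerSeries.coeff_rescale]
  rw [mul_left_comm, hM n, mul_sum]
  refine sum_congr rfl fun k hk ↦ ?_
  rw [← mem_antidiagonal.mp hk, pow_add]
  ring

end CommRing

lemma hasSum_coeff_mul_pow (P : ℂ[X]) (z : ℂ) :
    HasSum (fun n ↦ P.coeff n * z ^ n) (P.eval z) := by
  rw [eval_eq_sum_range]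
  refine hasSum_sum_of_ne_finset_zero fun n hn ↦ ?_
  rw [coeff_eq_zero_of_natDegree_lt (by simpa [Nat.lt_succ_iff] using hn), zero_mul]

lemma eval_eq_tsum_mul_eval_of_coe_eq_mul {E : PowerSeries ℂ} {P N : ℂ[X]}
    (h : (N : PowerSeries ℂ) = E * P) {z : ℂ}
    (hE : Summable fun n ↦ ‖PowerSeries.coeff n E * z ^ n‖) :
    N.eval z = (∑' n, PowerSeries.coeff n E * z ^ n) * P.eval z := by
  rw [← (hasSum_coeff_mul_pow P z).tsum_eq, ← (hasSum_coeff_mul_pow N z).tsum_eq,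
    tsum_mul_tsum_eq_tsum_sum_antidiagonal_of_summable_norm hE
      (hasSum_coeff_mul_pow P z).summable.norm]
  refine tsum_congr fun n ↦ ?_
  rw [← coeff_coe, h, PowerSeries.coeff_mul, sum_mul]
  refine sum_congr rfl fun k hk ↦ ?_
  rw [coeff_coe, ← mem_antidiagonal.mp hk, pow_add]
  ring

variable {M : ℂ[X]} {E : PowerSeries ℂ} {B R : ℝ} {z : ℂ}

/- At a root `z` of `M` the logarithmic derivative has a pole, so its power series cannot converge
there. -/
lemma HasLogDeriv.one_le_mul_norm_of_isRoot (h : HasLogDeriv M E) (hM : M ≠ 0) (hR : 0 ≤ R)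
    (hE : ∀ n, ‖PowerSeries.coeff n E‖ ≤ B * R ^ n) (hz : z ≠ 0) (hroot : M.IsRoot z) :
    1 ≤ R * ‖z‖ := by
  by_contra! hlt
  have hM' : derivative M ≠ 0 :=
    derivative_ne_zero.mpr (natDegree_pos_iff_degree_pos.mpr (degree_pos_of_root hM hroot)).ne'
  obtain ⟨D, hD, hDz⟩ := exists_eq_pow_rootMultiplicity_mul_and_not_dvd (derivative M) hM' z
  obtain ⟨g, hg⟩ := pow_rootMultiplicity_dvd M z
  set r := (derivative M).rootMultiplicity z with hr
  have hmult : M.rootMultiplicity z = r + 1 := by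
    have := (rootMultiplicity_pos hM).mpr hroot
    rw [hr, derivative_rootMultiplicity_of_root hroot]
    omega
  have hpow : (((X - C z) ^ r : ℂ[X]) : PowerSeries ℂ) ≠ 0 :=
    coe_eq_zero_iff.not.mpr (pow_ne_zero _ (X_sub_C_ne_zero z))
  have hcancel : ((X * D : ℂ[X]) : PowerSeries ℂ) = E * ((X - C z) * g : ℂ[X]) := by
    refine mul_left_cancel₀ hpow ?_
    rw [← Polynomial.coe_mul, mul_left_comm, ← hD, h, mul_left_comm, ← Polynomial.coe_mul,
      ← mul_assoc, ← pow_succ, ← hmult, ← hg]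
  have hsum : Summable fun n ↦ ‖PowerSeries.coeff n E * z ^ n‖ := by
    refine .of_nonneg_of_le (fun _ ↦ norm_nonneg _) (fun n ↦ ?_)
      ((summable_geometric_of_lt_one (by positivity) hlt).mul_left B)
    rw [norm_mul, norm_pow, mul_pow, ← mul_assoc]
    exact mul_le_mul_of_nonneg_right (hE n) (by positivity)
  have hzD : z * D.eval z = 0 := by
    simpa using eval_eq_tsum_mul_eval_of_coe_eq_mul hcancel hsum
  exact hDz (dvd_iff_isRoot.mpr ((mul_eq_zero.mp hzD).resolve_left hz))

/- Passing from `M` to `M(X) * M(-X)` cancels the odd coefficients of the logarithmic derivative. -/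
lemma HasLogDeriv.one_le_mul_norm_of_isRoot_of_even (h : HasLogDeriv M E) (hM : M ≠ 0) (hR : 0 ≤ R)
    (hE : ∀ n, ‖PowerSeries.coeff (2 * n) E‖ ≤ B * R ^ (2 * n)) (hz : z ≠ 0)
    (hroot : M.IsRoot z) : 1 ≤ R * ‖z‖ := by
  have hB : 0 ≤ B := by simpa using (norm_nonneg _).trans (hE 0)
  have hM' : M.comp (-X) ≠ 0 := fun h0 ↦ hM <| by
    simpa [comp_assoc] using congrArg (·.comp (-X)) h0
  refine (h.mul h.comp_neg_X).one_le_mul_norm_of_isRoot (B := 2 * B) (mul_ne_zero hM hM') hR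
    (fun n ↦ ?_) hz (by rw [IsRoot.def, eval_mul, hroot.eq_zero, zero_mul])
  rw [map_add, PowerSeries.coeff_rescale]
  obtain ⟨k, rfl | rfl⟩ := Nat.even_or_odd' n
  · rw [Even.neg_one_pow (even_two_mul k), one_mul, ← two_mul, norm_mul, Complex.norm_ofNat,
      mul_assoc]
    exact mul_le_mul_of_nonneg_left (hE k) two_pos.le
  · rw [Odd.neg_one_pow (odd_two_mul_add_one k), neg_one_mul, add_neg_cancel, norm_zero]
    positivity

lemma norm_le_of_isRoot_reverse {P : ℂ[X]} (hP : P ≠ 0) (hroot : ∀ z, P.IsRoot z → 1 ≤ R * ‖z‖)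
    {w : ℂ} (hw : P.reverse.IsRoot w) : ‖w‖ ≤ R := by
  have hw0 : w ≠ 0 := by
    rintro rfl
    rw [IsRoot.def, ← coeff_zero_eq_eval_zero, coeff_zero_reverse, leadingCoeff_eq_zero] at hw
    exact hP hw
  have hinv : P.IsRoot w⁻¹ := by
    let := invertibleOfNonzero (inv_ne_zero hw0)
    have := eval₂_reverse_eq_zero_iff (RingHom.id ℂ) w⁻¹ P
    simp only [invOf_eq_inv, inv_inv, eval₂_id] at this
    exact this.mp hw
  have := hroot _ hinv
  rwa [norm_inv, ← div_eq_mul_inv, one_le_div (norm_pos_iff.mpr hw0)] at this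

lemma norm_coeff_one_le_of_forall_isRoot {P : ℂ[X]} (h0 : P.coeff 0 = 1)
    (hroot : ∀ z, P.IsRoot z → 1 ≤ R * ‖z‖) : ‖P.coeff 1‖ ≤ P.natDegree * R := by
  have hP : P ≠ 0 := fun h ↦ by simp [h] at h0
  have htrail : P.natTrailingDegree = 0 := natTrailingDegree_eq_zero.mpr (.inr (by simp [h0]))
  have hmonic : P.reverse.Monic := by
    rw [Monic, reverse_leadingCoeff, trailingCoeff, htrail, h0]
  have hdeg : P.reverse.natDegree = P.natDegree := by rw [reverse_natDegree, htrail, Nat.sub_zero]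
  obtain hd | hd := P.natDegree.eq_zero_or_pos
  · simp [hd, coeff_eq_zero_of_natDegree_lt (show P.natDegree < 1 by omega)]
  have hsplit := IsAlgClosed.splits P.reverse
  have hnext : P.coeff 1 = -P.reverse.roots.sum := by
    rw [← hsplit.nextCoeff_eq_neg_sum_roots_of_monic hmonic,
      nextCoeff_of_natDegree_pos (hdeg ▸ hd), hdeg, coeff_reverse, revAt_le (by omega),
      Nat.sub_sub_self hd]
  calc ‖P.coeff 1‖ = ‖P.reverse.roots.sum‖ := by rw [hnext, norm_neg]
    _ ≤ (P.reverse.roots.map norm).sum := norm_multiset_sum_le _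
    _ ≤ (P.reverse.roots.map norm).card • R := by
      refine Multiset.sum_le_card_nsmul _ _ fun x hx ↦ ?_
      obtain ⟨w, hw, rfl⟩ := Multiset.mem_map.mp hx
      exact norm_le_of_isRoot_reverse hP hroot (isRoot_of_mem_roots hw)
    _ = P.natDegree * R := by
      rw [Multiset.card_map, nsmul_eq_mul, ← hsplit.natDegree_eq_card_roots, hdeg]

theorem norm_one_le_of_newton_identity {a b : ℕ → ℂ} {m : ℕ} (h0 : a 0 = 1)
    (ha : ∀ n, m ≤ n → a n = 0)
    (hab : ∀ n : ℕ, n * a n = ∑ k ∈ antidiagonal n, b k.1 * a k.2)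
    (hR : 0 ≤ R) (hb : ∀ n, ‖b (2 * n)‖ ≤ B * R ^ (2 * n)) : ‖a 1‖ ≤ ((m : ℝ) - 1) * R := by
  have hm : 1 ≤ m := Nat.one_le_iff_ne_zero.mpr fun hm ↦ by simpa [h0] using ha 0 hm.le
  set P : ℂ[X] := ∑ n ∈ range m, C (a n) * X ^ n with hPdef
  have hcoeff (n : ℕ) : P.coeff n = a n := by
    simp only [hPdef, finsetSum_coeff, coeff_C_mul, coeff_X_pow, mul_ite, mul_one, mul_zero,
      sum_ite_eq, mem_range]
    split_ifs with hn
    · rfl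
    · exact (ha n (not_lt.mp hn)).symm
  have hP0 : P.coeff 0 = 1 := (hcoeff 0).trans h0
  have hP : P ≠ 0 := fun h ↦ by simp [h] at hP0
  have hdeg : P.natDegree ≤ m - 1 := natDegree_le_iff_coeff_eq_zero.mpr fun n hn ↦ by
    rw [hcoeff, ha n (by omega)]
  have hlog : HasLogDeriv P (PowerSeries.mk b) := hasLogDeriv_iff.mpr fun n ↦ by
    simpa only [hcoeff, PowerSeries.coeff_mk] using hab n
  have hroot (z : ℂ) (hz : P.IsRoot z) : 1 ≤ R * ‖z‖ := by
    have hz0 : z ≠ 0 := by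
      rintro rfl
      rw [IsRoot.def, ← coeff_zero_eq_eval_zero, hP0] at hz
      exact one_ne_zero hz
    exact hlog.one_le_mul_norm_of_isRoot_of_even hP hR
      (fun n ↦ by simpa only [PowerSeries.coeff_mk] using hb n) hz0 hz
  calc ‖a 1‖ = ‖P.coeff 1‖ := by rw [hcoeff]
    _ ≤ P.natDegree * R := norm_coeff_one_le_of_forall_isRoot hP0 hroot
    _ ≤ ((m - 1 : ℕ) : ℝ) * R := by gcongr
    _ = (m - 1) * R := by rw [Nat.cast_pred hm]

end LogDeriv

section LSeries

variable {F : Type*} [Field F] [Finite F]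

lemma finite_setOf_monic_natDegree_eq (F : Type*) [Field F] [Finite F] (n : ℕ) :
    {h : F[X] | h.Monic ∧ h.natDegree = n}.Finite := by
  have : Finite (degreeLT F (n + 1)) := Module.finite_of_finite F
  refine Set.Finite.subset (Set.toFinite (degreeLT F (n + 1) : Set F[X])) ?_
  rintro h ⟨-, rfl⟩
  rw [SetLike.mem_coe, mem_degreeLT]
  exact degree_le_natDegree.trans_lt (by exact_mod_cast Nat.lt_succ_self _)

/-- The monic polynomials of degree `n` over a finite field. -/
noncomputable def monicsOfDegree (F : Type*) [Field F] [Finite F] (n : ℕ) : Finset F[X] :=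
  (finite_setOf_monic_natDegree_eq F n).toFinset

lemma mem_monicsOfDegree {n : ℕ} {h : F[X]} :
    h ∈ monicsOfDegree F n ↔ h.Monic ∧ h.natDegree = n := by
  simp [monicsOfDegree]

lemma monicsOfDegree_zero : monicsOfDegree F 0 = {1} := by
  ext h
  rw [mem_monicsOfDegree, mem_singleton]
  exact ⟨fun ⟨hm, hd⟩ ↦ hm.natDegree_eq_zero.mp hd, fun h ↦ h ▸ ⟨monic_one, natDegree_one⟩⟩

open Classical in
/-- The pairs `(P, k)` for which `P` is monic irreducible, `0 < k` and `P ^ k` has degree `n`: they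
index the support of the von Mangoldt function on monic polynomials of degree `n`. -/
noncomputable def primePowersOfDegree (F : Type*) [Field F] [Finite F] (n : ℕ) :
    Finset (F[X] × ℕ) :=
  {t ∈ (range (n + 1)).biUnion (monicsOfDegree F) ×ˢ Icc 1 n |
    Irreducible t.1 ∧ t.2 * t.1.natDegree = n}

lemma mem_primePowersOfDegree {n : ℕ} {t : F[X] × ℕ} : t ∈ primePowersOfDegree F n ↔
    t.1.Monic ∧ Irreducible t.1 ∧ 0 < t.2 ∧ t.2 * t.1.natDegree = n := by
  simp only [primePowersOfDegree, mem_filter, mem_product, mem_biUnion, mem_range, mem_Icc,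
    mem_monicsOfDegree]
  constructor
  · rintro ⟨⟨⟨d, -, hm, -⟩, hk, -⟩, hirr, hd⟩
    exact ⟨hm, hirr, hk, hd⟩
  · rintro ⟨hm, hirr, hk, rfl⟩
    exact ⟨⟨⟨_, Nat.lt_succ_of_le (Nat.le_mul_of_pos_left _ hk), hm, rfl⟩, hk,
      Nat.le_mul_of_pos_right _ hirr.natDegree_pos⟩, hirr, rfl⟩

open Classical in
/-- The pairs `(P, k)` for which `P` is monic irreducible, `0 < k` and `P ^ k` divides `h`. -/
noncomputable def primePowerDivisors (h : F[X]) : Finset (F[X] × ℕ) :=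
  {t ∈ (range (h.natDegree + 1)).biUnion (primePowersOfDegree F) | t.1 ^ t.2 ∣ h}

lemma mem_primePowerDivisors {h : F[X]} (h0 : h ≠ 0) {t : F[X] × ℕ} :
    t ∈ primePowerDivisors h ↔ t.1.Monic ∧ Irreducible t.1 ∧ 0 < t.2 ∧ t.1 ^ t.2 ∣ h := by
  simp only [primePowerDivisors, mem_filter, mem_biUnion, mem_range, mem_primePowersOfDegree]
  constructor
  · rintro ⟨⟨d, -, hm, hirr, hk, -⟩, hdvd⟩
    exact ⟨hm, hirr, hk, hdvd⟩
  · rintro ⟨hm, hirr, hk, hdvd⟩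
    refine ⟨⟨_, Nat.lt_succ_of_le ?_, hm, hirr, hk, rfl⟩, hdvd⟩
    rw [← natDegree_pow]
    exact natDegree_le_of_dvd hdvd h0

open UniqueFactorizationMonoid in
lemma sum_primePowerDivisors_natDegree {h : F[X]} (hh : h.Monic) :
    ∑ t ∈ primePowerDivisors h, t.1.natDegree = h.natDegree := by
  classical
  set s := normalizedFactors h
  have hmonic (P : F[X]) (hP : P ∈ s) : P.Monic := by
    rw [← normalize_normalized_factor P hP]
    exact monic_normalize (irreducible_of_normalized_factor P hP).ne_zero
  have hpow {P : F[X]} (hm : P.Monic) (hirr : Irreducible P) (k : ℕ) :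
      P ^ k ∣ h ↔ k ≤ s.count P := by
    rw [pow_dvd_iff_le_emultiplicity, emultiplicity_eq_count_normalizedFactors hirr hh.ne_zero,
      hm.normalize_eq_self, Nat.cast_le]
  have hdivisors (t : F[X] × ℕ) :
      t ∈ primePowerDivisors h ↔ t.1 ∈ s.toFinset ∧ t.2 ∈ Icc 1 (s.count t.1) := by
    rw [mem_primePowerDivisors hh.ne_zero, Multiset.mem_toFinset, mem_Icc]
    constructor
    · rintro ⟨hm, hirr, hk, hdvd⟩
      have hcount := (hpow hm hirr _).mp hdvd
      exact ⟨Multiset.count_pos.mp (hk.trans_le hcount), hk, hcount⟩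
    · rintro ⟨hP, hk, hcount⟩
      have hirr := irreducible_of_normalized_factor _ hP
      exact ⟨hmonic _ hP, hirr, hk, (hpow (hmonic _ hP) hirr _).mpr hcount⟩
  have hprod : s.prod = h := eq_of_monic_of_associated
    (by simpa using monic_multiset_prod_of_monic s id hmonic) hh (prod_normalizedFactors hh.ne_zero)
  calc ∑ t ∈ primePowerDivisors h, t.1.natDegree
      = ∑ P ∈ s.toFinset, ∑ _k ∈ Icc 1 (s.count P), P.natDegree :=
        sum_finset_product _ _ _ hdivisors
    _ = ∑ P ∈ s.toFinset, s.count P • P.natDegree := by simp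
    _ = h.natDegree := by
      rw [← sum_multiset_map_count, ← natDegree_multiset_prod_of_monic _ hmonic, hprod]

open Classical in
lemma sum_primePowersOfDegree_dvd_natDegree {h : F[X]} (hh : h.Monic) :
    ∑ j ∈ range (h.natDegree + 1), ∑ t ∈ primePowersOfDegree F j with t.1 ^ t.2 ∣ h,
      t.1.natDegree = h.natDegree := by
  conv_rhs => rw [← sum_primePowerDivisors_natDegree hh, primePowerDivisors, filter_biUnion]
  refine (sum_biUnion fun i _ j _ hij ↦ disjoint_left.mpr fun t hti htj ↦ hij ?_).symm
  rw [mem_filter, mem_primePowersOfDegree] at hti htj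
  exact hti.1.2.2.2.symm.trans htj.1.2.2.2

variable {R : Type*}

section CommSemiring

variable [CommSemiring R] (ψ : F[X] →* R)

/-- The coefficient of `T ^ n` in the `L`-series `∑ ψ(h) T ^ deg h`, the sum being over all monic
polynomials `h`. -/
noncomputable def lCoeff (n : ℕ) : R :=
  ∑ h ∈ monicsOfDegree F n, ψ h

/-- The coefficient of `T ^ n` in `T * L' / L`, where `L` is the `L`-series of `ψ`. -/
noncomputable def logDerivCoeff (n : ℕ) : R :=
  ∑ t ∈ primePowersOfDegree F n, t.1.natDegree * ψ (t.1 ^ t.2)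

lemma lCoeff_zero : lCoeff ψ 0 = 1 := by
  rw [lCoeff, monicsOfDegree_zero, sum_singleton, map_one]

lemma logDerivCoeff_zero : logDerivCoeff ψ 0 = 0 := by
  refine sum_eq_zero fun t ht ↦ ?_
  obtain ⟨-, hirr, hk, hd⟩ := mem_primePowersOfDegree.mp ht
  exact absurd hd (Nat.mul_pos hk hirr.natDegree_pos).ne'

open Classical in
lemma sum_monicsOfDegree_dvd {g : F[X]} (hg : g.Monic) {n : ℕ} (hn : g.natDegree ≤ n) :
    ∑ h ∈ monicsOfDegree F n with g ∣ h, ψ h = ψ g * lCoeff ψ (n - g.natDegree) := by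
  rw [lCoeff, mul_sum]
  refine (sum_nbij (g * ·) (fun u hu ↦ ?_) (fun u _ v _ huv ↦ ?_) (fun h hh ↦ ?_)
    (fun u _ ↦ (map_mul ψ g u).symm)).symm
  · obtain ⟨hu, hd⟩ := mem_monicsOfDegree.mp hu
    refine mem_filter.mpr ⟨mem_monicsOfDegree.mpr ⟨hg.mul hu, ?_⟩, dvd_mul_right _ _⟩
    rw [hg.natDegree_mul hu, hd, Nat.add_sub_cancel' hn]
  · exact mul_left_cancel₀ hg.ne_zero huv
  · obtain ⟨hh, u, rfl⟩ := mem_filter.mp hh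
    obtain ⟨hm, hd⟩ := mem_monicsOfDegree.mp hh
    have hu := hg.of_mul_monic_left hm
    rw [hg.natDegree_mul hu] at hd
    exact ⟨u, mem_monicsOfDegree.mpr ⟨hu, by omega⟩, rfl⟩

theorem natCast_mul_lCoeff (n : ℕ) :
    n * lCoeff ψ n = ∑ k ∈ antidiagonal n, logDerivCoeff ψ k.1 * lCoeff ψ k.2 := by
  classical
  calc n * lCoeff ψ n
      = ∑ h ∈ monicsOfDegree F n, ∑ j ∈ range (n + 1), ∑ t ∈ primePowersOfDegree F j,
          t.1.natDegree * if t.1 ^ t.2 ∣ h then ψ h else 0 := by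
        rw [lCoeff, mul_sum]
        refine sum_congr rfl fun h hh ↦ ?_
        obtain ⟨hm, rfl⟩ := mem_monicsOfDegree.mp hh
        conv_lhs => rw [← sum_primePowersOfDegree_dvd_natDegree hm]
        simp only [Nat.cast_sum, sum_mul, sum_filter, Nat.cast_ite, Nat.cast_zero, ite_mul,
          zero_mul, mul_ite, mul_zero]
    _ = ∑ j ∈ range (n + 1), ∑ t ∈ primePowersOfDegree F j,
          t.1.natDegree * ∑ h ∈ monicsOfDegree F n with t.1 ^ t.2 ∣ h, ψ h := by
        rw [sum_comm]
        refine sum_congr rfl fun j _ ↦ ?_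
        rw [sum_comm]
        simp only [mul_sum, sum_filter]
    _ = ∑ j ∈ range (n + 1), logDerivCoeff ψ j * lCoeff ψ (n - j) := by
        refine sum_congr rfl fun j hj ↦ ?_
        rw [logDerivCoeff, sum_mul]
        refine sum_congr rfl fun t ht ↦ ?_
        obtain ⟨hm, -, -, hd⟩ := mem_primePowersOfDegree.mp ht
        rw [← natDegree_pow] at hd
        rw [sum_monicsOfDegree_dvd ψ (hm.pow _) (hd ▸ mem_range_succ_iff.mp hj), hd, mul_assoc]
    _ = ∑ k ∈ antidiagonal n, logDerivCoeff ψ k.1 * lCoeff ψ k.2 :=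
        (Nat.sum_antidiagonal_eq_sum_range_succ
          (fun i j ↦ logDerivCoeff ψ i * lCoeff ψ j) n).symm

end CommSemiring

section Extension

variable {K : Type*} [Field K] [Algebra F K]

lemma card_filter_minpoly_eq [Fintype K] [DecidableEq F[X]] {P : F[X]} (hP : P.Monic)
    (hirr : Irreducible P) (hdvd : P.natDegree ∣ Module.finrank F K) :
    #{x : K | minpoly F x = P} = P.natDegree := by
  classical
  have hdvd' : P ∣ X ^ Nat.card K - X := by
    rw [Module.natCard_eq_pow_finrank (K := F)]
    exact hirr.natDegree_dvd_iff_dvd_X_pow_card_pow_sub_X.mp hdvd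
  have hsplit : (P.map (algebraMap F K)).Splits :=
    (splits_X_pow_nat_card_sub_X (K := K)).of_dvd
      (FiniteField.X_pow_card_sub_X_ne_zero K Finite.one_lt_card)
      (by simpa using Polynomial.map_dvd (algebraMap F K) hdvd')
  have hsep : (P.map (algebraMap F K)).Separable :=
    (PerfectField.separable_of_irreducible hirr).map
  have hroots : ({x : K | minpoly F x = P} : Finset K) =
      (P.map (algebraMap F K)).roots.toFinset := by
    ext x
    simp only [mem_filter, mem_univ, true_and, Multiset.mem_toFinset,
      mem_roots (hP.map (algebraMap F K)).ne_zero, IsRoot.def, eval_map_algebraMap]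
    exact ⟨fun h ↦ h ▸ minpoly.aeval F x,
      fun hx ↦ (minpoly.eq_of_irreducible_of_monic hirr hx hP).symm⟩
  rw [hroots, Multiset.toFinset_card_of_nodup (nodup_roots hsep), ← hsplit.natDegree_eq_card_roots,
    natDegree_map]

theorem logDerivCoeff_finrank [Fintype K] {R : Type*} [CommSemiring R] (ψ : F[X] →* R) :
    logDerivCoeff ψ (Module.finrank F K) =
      ∑ x : K, ψ (minpoly F x ^ (Module.finrank F K / (minpoly F x).natDegree)) := by
  classical
  set n := Module.finrank F K
  have hint (x : K) : IsIntegral F x := Algebra.IsIntegral.isIntegral x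
  have hmem (x : K) : (minpoly F x, n / (minpoly F x).natDegree) ∈ primePowersOfDegree F n :=
    mem_primePowersOfDegree.mpr ⟨minpoly.monic (hint x), minpoly.irreducible (hint x),
      Nat.div_pos (minpoly.natDegree_le x) (minpoly.natDegree_pos (hint x)),
      Nat.div_mul_cancel (minpoly.degree_dvd (hint x))⟩
  rw [logDerivCoeff, ← sum_fiberwise_of_maps_to fun x _ ↦ hmem x]
  refine sum_congr rfl fun ⟨P, k⟩ ht ↦ ?_
  obtain ⟨hm, hirr, -, hd⟩ := mem_primePowersOfDegree.mp ht
  have hfiber (x : K) :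
      (minpoly F x, n / (minpoly F x).natDegree) = (P, k) ↔ minpoly F x = P := by
    refine ⟨congrArg Prod.fst, ?_⟩
    rintro rfl
    rw [← hd, Nat.mul_div_cancel _ hirr.natDegree_pos]
  calc (P.natDegree : R) * ψ (P ^ k)
      = #{x : K | minpoly F x = P} • ψ (P ^ k) := by
        rw [card_filter_minpoly_eq hm hirr (Dvd.intro_left _ hd), nsmul_eq_mul]
    _ = ∑ x with (minpoly F x, n / (minpoly F x).natDegree) = (P, k), ψ (P ^ k) := by
        rw [sum_const]
        simp only [hfiber]
    _ = _ := sum_congr rfl fun x hx ↦ by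
        obtain ⟨rfl, rfl⟩ := Prod.mk.inj (mem_filter.mp hx).2
        rfl

lemma norm_algebraMap_sub_gen {A S : Type*} [CommRing A] [CommRing S] [Algebra A S]
    (pb : PowerBasis A S) (a : A) :
    Algebra.norm A (algebraMap A S a - pb.gen) = (minpoly A pb.gen).eval a := by
  rw [← charpoly_leftMulMatrix pb, Matrix.eval_charpoly, Algebra.norm_eq_matrix_det pb.basis,
    map_sub, AlgHom.commutes]
  rfl

lemma norm_algebraMap_sub {F K : Type*} [Field F] [Field K] [Algebra F K] [FiniteDimensional F K]
    (a : F) (x : K) :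
    Algebra.norm F (algebraMap F K a - x) =
      (minpoly F x).eval a ^ (Module.finrank F K / (minpoly F x).natDegree) := by
  have hx : IsIntegral F x := .of_finite F x
  let pb := IntermediateField.adjoin.powerBasis hx
  have hmap : algebraMap F K a - x = algebraMap _ K (algebraMap F _ a - pb.gen) := by
    rw [map_sub, ← IsScalarTower.algebraMap_apply, IntermediateField.adjoin.powerBasis_gen,
      IntermediateField.AdjoinSimple.algebraMap_gen]
  have hgen : minpoly F pb.gen = minpoly F x := by
    rw [IntermediateField.adjoin.powerBasis_gen, IntermediateField.minpoly_gen]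
  have hdeg := Module.finrank_mul_finrank F (IntermediateField.adjoin F {x}) K
  rw [IntermediateField.adjoin.finrank hx] at hdeg
  rw [hmap, ← Algebra.norm_norm (S := IntermediateField.adjoin F {x}), Algebra.norm_algebraMap,
    map_pow, norm_algebraMap_sub_gen, hgen, ← hdeg,
    Nat.mul_div_cancel_left _ (minpoly.natDegree_pos hx)]

lemma sub_one_div_mul_half {a b : ℕ} (ha : Odd a) (hb : Odd b) (h : a - 1 ∣ b - 1) :
    (b - 1) / (a - 1) * (a / 2) = b / 2 := by
  obtain ⟨c, rfl⟩ := ha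
  obtain ⟨d, rfl⟩ := hb
  simp only [Nat.add_sub_cancel] at h ⊢
  rw [Nat.mul_div_mul_left _ _ two_pos, Nat.mul_add_div two_pos, Nat.mul_add_div two_pos]
  simpa using Nat.div_mul_cancel (Nat.dvd_of_mul_dvd_mul_left two_pos h)

lemma quadraticChar_norm {F : Type*} [Field F] [Fintype F] [DecidableEq F] [Fintype K]
    [DecidableEq K] [Algebra F K] (hF : ringChar F ≠ 2) (y : K) :
    quadraticChar F (Algebra.norm F y) = quadraticChar K y := by
  have hK : ringChar K ≠ 2 := Algebra.ringChar_eq F K ▸ hF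
  have hdvd : Fintype.card F - 1 ∣ Fintype.card K - 1 := by
    rw [Module.card_eq_pow_finrank (K := F) (V := K)]
    simpa using Nat.sub_dvd_pow_sub_pow (Fintype.card F) 1 (Module.finrank F K)
  refine Int.cast_injOn_of_ringChar_ne_two hK (quadraticChar_isQuadratic F _)
    (quadraticChar_isQuadratic K y) ?_
  have heuler := congrArg (algebraMap F K)
    (quadraticChar_eq_pow_of_char_ne_two' hF (Algebra.norm F y))
  rw [map_intCast, map_pow, FiniteField.algebraMap_norm_eq_pow, ← pow_mul,
    Nat.card_eq_fintype_card, Nat.card_eq_fintype_card,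
    sub_one_div_mul_half (FiniteField.odd_card_of_char_ne_two hF |> Nat.odd_iff.mpr)
      (FiniteField.odd_card_of_char_ne_two hK |> Nat.odd_iff.mpr) hdvd] at heuler
  rw [heuler, quadraticChar_eq_pow_of_char_ne_two' hK]

end Extension

section EvalChar

variable {F : Type*} [Field F] {R : Type*} [CommRing R]

/-- The multiplicative function `h ↦ χ (∏ a ∈ A, h(a))` on polynomials. -/
noncomputable def evalChar (χ : MulChar F R) (A : Finset F) : F[X] →* R where
  toFun h := ∏ a ∈ A, χ (h.eval a)
  map_one' := by simp
  map_mul' g h := by simp only [eval_mul, map_mul, prod_mul_distrib]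

lemma evalChar_apply (χ : MulChar F R) (A : Finset F) (h : F[X]) :
    evalChar χ A h = ∏ a ∈ A, χ (h.eval a) := rfl

lemma logDerivCoeff_evalChar {K : Type*} [Fintype F] [DecidableEq F] [Field K] [Fintype K]
    [DecidableEq K] [Algebra F K] (hF : ringChar F ≠ 2) (A : Finset F) :
    logDerivCoeff (evalChar (quadraticChar F) A) (Module.finrank F K) =
      ∑ x : K, ∏ a ∈ A, quadraticChar K (algebraMap F K a - x) := by
  rw [logDerivCoeff_finrank]
  refine sum_congr rfl fun x _ ↦ ?_
  rw [evalChar_apply]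
  refine prod_congr rfl fun a _ ↦ ?_
  rw [eval_pow, ← norm_algebraMap_sub, quadraticChar_norm hF]

lemma lCoeff_evalChar_one [Fintype F] (χ : MulChar F R) (A : Finset F) :
    lCoeff (evalChar χ A) 1 = ∑ c, ∏ a ∈ A, χ (c + a) := by
  refine (sum_nbij (X + C ·) (fun c _ ↦ ?_) (fun c _ d _ h ↦ ?_) (fun h hh ↦ ?_)
    (fun c _ ↦ ?_)).symm
  · exact mem_monicsOfDegree.mpr ⟨monic_X_add_C c, natDegree_X_add_C c⟩
  · simpa using h
  · obtain ⟨hm, hd⟩ := mem_monicsOfDegree.mp hh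
    exact ⟨h.coeff 0, mem_univ _, (hm.eq_X_add_C hd).symm⟩
  · simp [evalChar_apply, add_comm]

section RescaleValue

variable [DecidableEq F] {A : Finset F} {a₀ ν : F}

/-- The polynomial obtained from `h` by multiplying its value at `a₀` by `ν` and keeping its values
at the other points of `A`. -/
noncomputable def rescaleValue (A : Finset F) (a₀ ν : F) (h : F[X]) : F[X] :=
  h + C ((ν - 1) * h.eval a₀) * Lagrange.basis A id a₀

lemma eval_rescaleValue_self (ha₀ : a₀ ∈ A) (h : F[X]) :
    (rescaleValue A a₀ ν h).eval a₀ = ν * h.eval a₀ := by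
  have hbasis : (Lagrange.basis A id a₀).eval a₀ = 1 :=
    Lagrange.eval_basis_self (Set.injOn_id _) ha₀
  rw [rescaleValue, eval_add, eval_mul, eval_C, hbasis]
  ring

lemma eval_rescaleValue_of_ne {a : F} (ha : a ∈ A) (hne : a ≠ a₀) (h : F[X]) :
    (rescaleValue A a₀ ν h).eval a = h.eval a := by
  have hbasis : (Lagrange.basis A id a₀).eval a = 0 :=
    Lagrange.eval_basis_of_ne (v := id) hne.symm ha
  rw [rescaleValue, eval_add, eval_mul, hbasis, mul_zero, add_zero]

lemma rescaleValue_injective (ha₀ : a₀ ∈ A) (hν : ν ≠ 0) :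
    Function.Injective (rescaleValue A a₀ ν) := by
  intro g h hgh
  have heval : g.eval a₀ = h.eval a₀ := mul_left_cancel₀ hν <| by
    rw [← eval_rescaleValue_self ha₀, hgh, eval_rescaleValue_self ha₀]
  simpa [rescaleValue, heval] using hgh

lemma rescaleValue_mem_monicsOfDegree [Finite F] (ha₀ : a₀ ∈ A) {n : ℕ} (hn : #A ≤ n) {h : F[X]}
    (hh : h ∈ monicsOfDegree F n) : rescaleValue A a₀ ν h ∈ monicsOfDegree F n := by
  obtain ⟨hm, hd⟩ := mem_monicsOfDegree.mp hh
  have hlt : (C ((ν - 1) * h.eval a₀) * Lagrange.basis A id a₀).degree < h.degree := by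
    rw [degree_eq_natDegree hm.ne_zero, hd, ← smul_eq_C_mul]
    refine (degree_smul_le _ _).trans_lt ?_
    rw [Lagrange.degree_basis (Set.injOn_id _) ha₀]
    have := card_pos.mpr ⟨a₀, ha₀⟩
    exact_mod_cast (by omega : #A - 1 < n)
  exact mem_monicsOfDegree.mpr ⟨hm.add_of_left hlt, by
    rw [rescaleValue, natDegree_add_eq_left_of_degree_lt hlt, hd]⟩

lemma evalChar_rescaleValue (χ : MulChar F R) (ha₀ : a₀ ∈ A) (h : F[X]) :
    evalChar χ A (rescaleValue A a₀ ν h) = χ ν * evalChar χ A h := by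
  rw [evalChar_apply, evalChar_apply, ← mul_prod_erase A _ ha₀, ← mul_prod_erase A _ ha₀,
    eval_rescaleValue_self ha₀, map_mul, mul_assoc]
  congr 2
  exact prod_congr rfl fun a ha ↦ by
    rw [eval_rescaleValue_of_ne (mem_of_mem_erase ha) (ne_of_mem_erase ha)]

end RescaleValue

theorem lCoeff_evalChar_eq_zero [Finite F] [IsDomain R] {χ : MulChar F R} (hχ : χ ≠ 1)
    {A : Finset F} (hA : A.Nonempty) {n : ℕ} (hn : #A ≤ n) : lCoeff (evalChar χ A) n = 0 := by
  classical
  obtain ⟨a₀, ha₀⟩ := hA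
  obtain ⟨ν, hν⟩ := MulChar.ne_one_iff.mp hχ
  have hmaps : Set.MapsTo (rescaleValue A a₀ ν) (monicsOfDegree F n) (monicsOfDegree F n) :=
    fun _ hh ↦ rescaleValue_mem_monicsOfDegree ha₀ hn hh
  have hinj : Set.InjOn (rescaleValue A a₀ ν) (monicsOfDegree F n) :=
    (rescaleValue_injective ha₀ ν.ne_zero).injOn
  have hinvariant : χ ν * lCoeff (evalChar χ A) n = lCoeff (evalChar χ A) n := by
    rw [lCoeff, mul_sum]
    exact sum_nbij _ hmaps hinj (surjOn_of_injOn_of_card_le _ hmaps hinj le_rfl)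
      fun h _ ↦ (evalChar_rescaleValue χ ha₀ h).symm
  exact (mul_left_eq_self₀.mp hinvariant).resolve_left hν

end EvalChar

end LSeries

section QuadraticCharSums

variable {F : Type*} [Field F] [Fintype F] [DecidableEq F]

lemma natDegree_prod_C_sub_X {K ι : Type*} [Field K] (s : Finset ι) (v : ι → K) :
    (∏ t ∈ s, (C (v t) - X)).natDegree = #s := by
  have hdeg (t : ι) : (C (v t) - X).natDegree = 1 := by rw [natDegree_sub, natDegree_X_sub_C]
  rw [natDegree_prod _ _ fun t _ ↦ ne_zero_of_natDegree_gt (n := 0) (by simp [hdeg])]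
  simp [hdeg]

lemma abs_logDerivCoeff_evalChar_le (hF : ringChar F ≠ 2) {A : Finset F} (hA : Odd #A) (n : ℕ) :
    |logDerivCoeff (evalChar (quadraticChar F) A) (2 * n)| ≤
      (3 * #A + 4) * (Fintype.card F : ℤ) ^ n := by
  classical
  obtain rfl | hn := eq_or_ne n 0
  · rw [mul_zero, logDerivCoeff_zero, abs_zero]
    positivity
  have : Fact (ringChar F).Prime := ⟨CharP.char_is_prime F _⟩
  have : NeZero (2 * n) := ⟨by omega⟩
  let K := FiniteField.Extension F (ringChar F) (2 * n)
  let : Fintype K := Fintype.ofFinite K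
  have hcard : Fintype.card K = (Fintype.card F ^ n) ^ 2 := by
    rw [← Nat.card_eq_fintype_card, FiniteField.natCard_extension, Nat.card_eq_fintype_card,
      mul_comm, pow_mul]
  have hodd : Odd (Fintype.card F ^ n) :=
    (Nat.odd_iff.mpr (FiniteField.odd_card_of_char_ne_two hF)).pow
  have hdeg := natDegree_prod_C_sub_X A (algebraMap F K)
  have hlog := logDerivCoeff_evalChar (K := K) hF A
  rw [FiniteField.finrank_extension] at hlog
  have hstepanov := abs_sum_quadraticChar_eval_le hcard hodd (hdeg ▸ hA)
  rw [hdeg] at hstepanov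
  simpa only [hlog, eval_prod, map_prod, eval_sub, eval_C, eval_X, Nat.cast_pow] using hstepanov

theorem abs_sum_prod_quadraticChar_le_of_odd (hF : ringChar F ≠ 2) {A : Finset F} (hA : Odd #A) :
    |((∑ c, ∏ a ∈ A, quadraticChar F (c + a) : ℤ) : ℝ)| ≤
      ((#A : ℝ) - 1) * √(Fintype.card F) := by
  have hne : A.Nonempty := card_pos.mp hA.pos
  rw [← lCoeff_evalChar_one, ← Complex.norm_intCast]
  refine norm_one_le_of_newton_identity (B := 3 * #A + 4)
    (a := fun n ↦ ((lCoeff (evalChar (quadraticChar F) A) n : ℤ) : ℂ))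
    (b := fun n ↦ ((logDerivCoeff (evalChar (quadraticChar F) A) n : ℤ) : ℂ))
    (by simp [lCoeff_zero])
    (fun n hn ↦ by simp [lCoeff_evalChar_eq_zero (quadraticChar_ne_one hF) hne hn])
    (fun n ↦ by exact_mod_cast natCast_mul_lCoeff (evalChar (quadraticChar F) A) n)
    (Real.sqrt_nonneg _) fun n ↦ ?_
  rw [Complex.norm_intCast, pow_mul, Real.sq_sqrt (Nat.cast_nonneg _)]
  exact_mod_cast abs_logDerivCoeff_evalChar_le hF hA n

lemma abs_prod_quadraticChar_le_one {ι : Type*} (s : Finset ι) (g : ι → F) :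
    |∏ t ∈ s, quadraticChar F (g t)| ≤ 1 := by
  rw [← map_prod]
  rcases quadraticChar_isQuadratic F (∏ t ∈ s, g t) with h | h | h <;> simp [h]

lemma quadraticChar_mul_prod_add_of_odd {B : Finset F} (hB : Odd #B) (h0 : 0 ∉ B) {c : F}
    (hc : c ≠ 0) :
    quadraticChar F c * ∏ b ∈ B, quadraticChar F (c + b) =
      (∏ b ∈ B, quadraticChar F b) * ∏ b ∈ B, quadraticChar F (c⁻¹ + b⁻¹) := by
  have hpow : quadraticChar F c ^ #B = quadraticChar F c := by
    obtain ⟨k, hk⟩ := hB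
    rw [hk, pow_succ, pow_mul, quadraticChar_sq_one hc, one_pow, one_mul]
  conv_lhs => rw [← hpow, ← prod_const]
  rw [← prod_mul_distrib, ← prod_mul_distrib]
  refine prod_congr rfl fun b hb ↦ ?_
  have hb0 : b ≠ 0 := ne_of_mem_of_not_mem hb h0
  have hsq : c * (c + b) = b * (c⁻¹ + b⁻¹) * c ^ 2 := by
    field_simp
    ring
  rw [← map_mul, ← map_mul, hsq, map_mul _ _ (c ^ 2), quadraticChar_sq_one' hc, mul_one]

open Pointwise in
lemma sum_quadraticChar_mul_prod_add_of_odd {B : Finset F} (hB : Odd #B) (h0 : 0 ∉ B) :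
    ∑ c, quadraticChar F c * ∏ b ∈ B, quadraticChar F (c + b) =
      (∏ b ∈ B, quadraticChar F b) *
        (∑ c, ∏ b ∈ B⁻¹, quadraticChar F (c + b) - ∏ b ∈ B⁻¹, quadraticChar F b) := by
  have hinv : ∑ c : F, ∏ b ∈ B, quadraticChar F (c⁻¹ + b⁻¹) =
      ∑ c : F, ∏ b ∈ B⁻¹, quadraticChar F (c + b) := by
    simp only [prod_inv_index]
    exact Equiv.sum_comp (Equiv.inv F) fun c ↦ ∏ b ∈ B, quadraticChar F (c + b⁻¹)
  rw [← hinv, ← add_sum_erase _ _ (mem_univ 0), ← add_sum_erase _ _ (mem_univ (0 : F)),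
    sum_congr rfl fun c hc ↦ quadraticChar_mul_prod_add_of_odd hB h0 (ne_of_mem_erase hc),
    ← mul_sum]
  simp [prod_inv_index]

open Pointwise in
lemma abs_sum_quadraticChar_mul_prod_add_le_of_odd (hF : ringChar F ≠ 2) {B : Finset F}
    (hB : Odd #B) (h0 : 0 ∉ B) :
    |((∑ c, quadraticChar F c * ∏ b ∈ B, quadraticChar F (c + b) : ℤ) : ℝ)| ≤
      ((#B : ℝ) - 1) * √(Fintype.card F) + 1 := by
  have hcard : #B⁻¹ = #B := card_inv B
  have hsum := abs_sum_prod_quadraticChar_le_of_odd hF (hcard ▸ hB)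
  rw [hcard] at hsum
  have hprod (C : Finset F) : |((∏ b ∈ C, quadraticChar F b : ℤ) : ℝ)| ≤ 1 := by
    exact_mod_cast abs_prod_quadraticChar_le_one C fun b ↦ b
  rw [sum_quadraticChar_mul_prod_add_of_odd hB h0, Int.cast_mul, abs_mul, Int.cast_sub]
  calc _ ≤ |((∑ c, ∏ b ∈ B⁻¹, quadraticChar F (c + b) : ℤ) : ℝ) -
          ((∏ b ∈ B⁻¹, quadraticChar F b : ℤ) : ℝ)| :=
        mul_le_of_le_one_left (abs_nonneg _) (hprod B)
    _ ≤ _ := (abs_sub _ _).trans (add_le_add hsum (hprod B⁻¹))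

theorem abs_sum_prod_quadraticChar_le_of_even (hF : ringChar F ≠ 2) {A : Finset F}
    (hA : Even #A) (hne : A.Nonempty) :
    |((∑ c, ∏ a ∈ A, quadraticChar F (c + a) : ℤ) : ℝ)| ≤
      ((#A : ℝ) - 2) * √(Fintype.card F) + 1 := by
  obtain ⟨a₀, ha₀⟩ := hne
  have hpos : 1 ≤ #A := card_pos.mpr ⟨a₀, ha₀⟩
  have hinj : Function.Injective fun a : F ↦ a - a₀ := sub_left_injective
  set B := (A.erase a₀).image (· - a₀) with hBdef
  have hcard : #B = #A - 1 := by
    rw [hBdef, card_image_of_injective _ hinj, card_erase_of_mem ha₀]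
  have h0 : 0 ∉ B := by simp [hBdef, sub_eq_zero]
  have htranslate : ∑ c, ∏ a ∈ A, quadraticChar F (c + a) =
      ∑ c, quadraticChar F c * ∏ b ∈ B, quadraticChar F (c + b) := by
    rw [← Equiv.sum_comp (Equiv.subRight a₀)]
    refine sum_congr rfl fun c _ ↦ ?_
    rw [← mul_prod_erase A _ ha₀, hBdef, prod_image hinj.injOn]
    simp only [Equiv.subRight_apply, sub_add_cancel, sub_add_eq_add_sub, add_sub_assoc]
  have h := abs_sum_quadraticChar_mul_prod_add_le_of_odd hF
    (hcard ▸ Nat.Even.sub_odd hpos hA odd_one) h0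
  rw [htranslate]
  rw [hcard, Nat.cast_sub hpos, Nat.cast_one] at h
  linarith

/-- The bound for the sum of the quadratic character over a product of `k` distinct linear factors
over the field with `q` elements: `(k - 1) * √q` for odd `k` and `(k - 2) * √q + 1` for even `k`,
in a closed form that can be summed against binomial coefficients. -/
noncomputable def charSumBound (q k : ℕ) : ℝ :=
  ((k : ℝ) - 1) * √q - (1 + (-1) ^ k) / 2 * (√q - 1)

theorem abs_sum_prod_quadraticChar_le (hF : ringChar F ≠ 2) {A : Finset F} (hne : A.Nonempty) :
    |((∑ c, ∏ a ∈ A, quadraticChar F (c + a) : ℤ) : ℝ)| ≤ charSumBound (Fintype.card F) #A := by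
  rcases Nat.even_or_odd #A with hA | hA
  · refine (abs_sum_prod_quadraticChar_le_of_even hF hA hne).trans_eq ?_
    rw [charSumBound, hA.neg_one_pow]
    ring
  · refine (abs_sum_prod_quadraticChar_le_of_odd hF hA).trans_eq ?_
    rw [charSumBound, hA.neg_one_pow]
    ring

end QuadraticCharSums

section PatternCount

lemma sum_powerset_charSumBound {ι : Type*} {s : Finset ι} (hs : s.Nonempty) (q : ℕ) :
    ∑ S ∈ s.powerset, charSumBound q #S =
      √q * (2 ^ (#s - 1) * ((#s : ℝ) - 3)) + 2 ^ (#s - 1) := by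
  have hcard : ∑ S ∈ s.powerset, (#S : ℝ) = #s * 2 ^ (#s - 1) := by
    have h := sum_powerset_apply_card (fun k ↦ k) (x := s)
    simp only [smul_eq_mul, mul_comm (Nat.choose _ _), Nat.sum_range_mul_choose] at h
    exact_mod_cast h
  have hsign : ∑ S ∈ s.powerset, (-1 : ℝ) ^ #S = 0 := by
    exact_mod_cast sum_powerset_neg_one_pow_card_of_nonempty hs
  have hpow : (2 : ℝ) ^ #s = 2 * 2 ^ (#s - 1) := (mul_pow_sub_one (card_pos.mpr hs).ne' 2).symm
  simp only [charSumBound]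
  rw [sum_sub_distrib, ← sum_mul, ← sum_mul, ← sum_div, sum_add_distrib, sum_sub_distrib, hcard,
    hsign, sum_const, card_powerset, nsmul_eq_mul, Nat.cast_pow, Nat.cast_ofNat, hpow]
  ring

lemma sum_powerset_erase_empty_charSumBound {ι : Type*} [DecidableEq ι] {s : Finset ι}
    (hs : s.Nonempty) (q : ℕ) :
    ∑ S ∈ s.powerset.erase ∅, charSumBound q #S =
      √q * (2 ^ (#s - 1) * ((#s : ℝ) - 3) + 2) + 2 ^ (#s - 1) - 1 := by
  have hempty : charSumBound q #(∅ : Finset ι) = 1 - 2 * √q := by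
    simp only [charSumBound, card_empty]
    push_cast
    ring
  have hsum := sum_powerset_charSumBound hs q
  rw [← add_sum_erase _ _ (empty_mem_powerset _), hempty] at hsum
  linarith

variable {F : Type*} [Field F] [Fintype F] [DecidableEq F] {ι : Type*} [Fintype ι]

theorem abs_sum_prod_one_add_sub_card_le (hF : ringChar F ≠ 2) [Nonempty ι] {i : ι → F}
    (hi : Function.Injective i) {ε : ι → ℤ} (hε : ∀ t, |ε t| ≤ 1) :
    |((∑ j, ∏ t, (1 + ε t * quadraticChar F (j + i t)) : ℤ) : ℝ) - Fintype.card F| ≤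
      √(Fintype.card F) * (2 ^ (Fintype.card ι - 1) * ((Fintype.card ι : ℝ) - 3) + 2) +
        2 ^ (Fintype.card ι - 1) - 1 := by
  classical
  have hexpand : ∑ j, ∏ t, (1 + ε t * quadraticChar F (j + i t)) =
      Fintype.card F + ∑ S ∈ (univ : Finset ι).powerset.erase ∅,
        (∏ t ∈ S, ε t) * ∑ j, ∏ t ∈ S, quadraticChar F (j + i t) := by
    simp only [prod_one_add, prod_mul_distrib]
    rw [sum_comm]
    simp only [← mul_sum]
    rw [← add_sum_erase _ _ (empty_mem_powerset _)]
    simp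
  have hterm (S : Finset ι) (hS : S.Nonempty) :
      |(((∏ t ∈ S, ε t) * ∑ j, ∏ t ∈ S, quadraticChar F (j + i t) : ℤ) : ℝ)| ≤
        charSumBound (Fintype.card F) #S := by
    have hsign : |((∏ t ∈ S, ε t : ℤ) : ℝ)| ≤ 1 := by
      rw [← Int.cast_abs, abs_prod]
      exact_mod_cast prod_le_one (fun t _ ↦ abs_nonneg (ε t)) fun t _ ↦ hε t
    have hsum := abs_sum_prod_quadraticChar_le hF (hS.image i)
    simp only [prod_image hi.injOn, card_image_of_injective S hi] at hsum
    rw [Int.cast_mul, abs_mul]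
    exact (mul_le_of_le_one_left (abs_nonneg _) hsign).trans hsum
  rw [hexpand, Int.cast_add, Int.cast_natCast, add_sub_cancel_left, Int.cast_sum,
    ← card_univ (α := ι), ← sum_powerset_erase_empty_charSumBound univ_nonempty]
  exact (abs_sum_le_sum_abs _ _).trans <| sum_le_sum fun S hS ↦
    hterm S (nonempty_iff_ne_empty.mpr (ne_of_mem_erase hS))

lemma quadraticChar_eq_one_iff {x : F} : quadraticChar F x = 1 ↔ x ≠ 0 ∧ IsSquare x := by
  rcases eq_or_ne x 0 with rfl | hx
  · simp
  · rw [quadraticChar_one_iff_isSquare hx, and_iff_right hx]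

/-- The value of the quadratic character, on nonzero arguments, that corresponds to a bit of the
Legendre sequence: `1` for `true` and `-1` for `false`. -/
def bitSign (b : Bool) : ℤ := if b then 1 else -1

lemma abs_bitSign (b : Bool) : |bitSign b| = 1 := by
  cases b <;> rfl

lemma one_add_bitSign_mul_quadraticChar {x : F} (hx : x ≠ 0) (b : Bool) :
    1 + bitSign b * quadraticChar F x = if quadraticChar F x = 1 ↔ b = true then 2 else 0 := by
  rcases quadraticChar_dichotomy hx with h | h <;> cases b <;> simp [h, bitSign]

lemma prod_one_add_bitSign_mul_quadraticChar {ι : Type*} {s : Finset ι} {x : ι → F}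
    (hx : ∀ t ∈ s, x t ≠ 0) (b : ι → Bool) :
    ∏ t ∈ s, (1 + bitSign (b t) * quadraticChar F (x t)) =
      if ∀ t ∈ s, (quadraticChar F (x t) = 1 ↔ b t = true) then 2 ^ #s else 0 := by
  rw [prod_congr rfl fun t ht ↦ one_add_bitSign_mul_quadraticChar (hx t ht) (b t),
    prod_ite_zero, prod_const]

lemma abs_ite_two_pow_sub_prod_le {x : ι → F} (hx : Function.Injective x) (b : ι → Bool) :
    |(if ∀ t, (quadraticChar F (x t) = 1 ↔ b t = true) then 2 ^ Fintype.card ι else 0) -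
        ∏ t, (1 + bitSign (b t) * quadraticChar F (x t))| ≤
      if ∃ t, x t = 0 then 2 ^ (Fintype.card ι - 1) else 0 := by
  classical
  by_cases hzero : ∃ t, x t = 0
  · rw [if_pos hzero]
    obtain ⟨t₀, ht₀⟩ := hzero
    have hne (t : ι) (ht : t ∈ univ.erase t₀) : x t ≠ 0 := fun h ↦
      ne_of_mem_erase ht (hx (h.trans ht₀.symm))
    have : Nonempty ι := ⟨t₀⟩
    have hpow : (2 : ℤ) ^ Fintype.card ι = 2 * 2 ^ (Fintype.card ι - 1) :=
      (mul_pow_sub_one Fintype.card_ne_zero 2).symm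
    have hpos : (0 : ℤ) < 2 ^ (Fintype.card ι - 1) := by positivity
    rw [← mul_prod_erase _ _ (mem_univ t₀), ht₀, quadraticChar_zero, mul_zero, add_zero, one_mul,
      prod_one_add_bitSign_mul_quadraticChar hne, card_erase_of_mem (mem_univ _), card_univ, hpow]
    split_ifs with hall hrest
    · rw [abs_le]
      constructor <;> linarith
    · exact absurd (fun t _ ↦ hall t) hrest
    · rw [abs_le]
      constructor <;> linarith
    · simp
  · rw [if_neg hzero]
    push Not at hzero
    rw [prod_one_add_bitSign_mul_quadraticChar fun t _ ↦ hzero t]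
    simp

lemma abs_two_pow_mul_card_sub_sum_prod_le {i : ι → F} (hi : Function.Injective i)
    (b : ι → Bool) :
    |2 ^ Fintype.card ι * (#{j | ∀ t, (quadraticChar F (j + i t) = 1 ↔ b t = true)} : ℤ) -
        ∑ j, ∏ t, (1 + bitSign (b t) * quadraticChar F (j + i t))| ≤
      Fintype.card ι * 2 ^ (Fintype.card ι - 1) := by
  have hzero : #{j | ∃ t, j + i t = 0} ≤ Fintype.card ι := by
    have hsub : ({j | ∃ t, j + i t = 0} : Finset F) ⊆ univ.image fun t ↦ -i t := fun j hj ↦ by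
      obtain ⟨t, ht⟩ := (mem_filter.mp hj).2
      exact mem_image.mpr ⟨t, mem_univ t, (eq_neg_of_add_eq_zero_left ht).symm⟩
    exact (card_le_card hsub).trans card_image_le
  rw [mul_comm, ← nsmul_eq_mul, ← sum_const, sum_filter, ← sum_sub_distrib]
  calc _ ≤ ∑ j : F, if ∃ t, j + i t = 0 then (2 ^ (Fintype.card ι - 1) : ℤ) else 0 :=
        (abs_sum_le_sum_abs _ _).trans <| sum_le_sum fun j _ ↦
          abs_ite_two_pow_sub_prod_le ((add_right_injective j).comp hi) b
    _ = #{j | ∃ t, j + i t = 0} * 2 ^ (Fintype.card ι - 1) := by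
        rw [← sum_filter, sum_const, nsmul_eq_mul]
    _ ≤ _ := by gcongr

end PatternCount

theorem stmt15_general {F : Type*} [Field F] [Fintype F] (hF : ringChar F ≠ 2) {ι : Type*}
    [Fintype ι] [Nonempty ι] (i : ι → F) (hi : Function.Injective i) (b : ι → Bool) :
    |(Nat.card {j : F // ∀ t, ((j + i t ≠ 0 ∧ IsSquare (j + i t)) ↔ b t = true)} : ℝ) -
        (Fintype.card F : ℝ) / 2 ^ Fintype.card ι| ≤
      legBound (Fintype.card F) (Fintype.card ι) := by
  classical
  set s := Fintype.card ι
  set N := #{j : F | ∀ t, (quadraticChar F (j + i t) = 1 ↔ b t = true)} with hN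
  have hcard : Nat.card {j : F // ∀ t, ((j + i t ≠ 0 ∧ IsSquare (j + i t)) ↔ b t = true)} = N := by
    simp only [← quadraticChar_eq_one_iff, hN, Nat.card_eq_fintype_card, Fintype.card_subtype]
  have hcount : |2 ^ s * (N : ℝ) -
      ((∑ j, ∏ t, (1 + bitSign (b t) * quadraticChar F (j + i t)) : ℤ) : ℝ)| ≤
      s * 2 ^ (s - 1) := by
    exact_mod_cast abs_two_pow_mul_card_sub_sum_prod_le hi b
  have hsum := abs_sum_prod_one_add_sub_card_le hF hi fun t ↦ (abs_bitSign (b t)).le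
  have hpos : (0 : ℝ) < 2 ^ s := by positivity
  rw [hcard, legBound, le_div_iff₀ hpos, ← abs_of_pos hpos, ← abs_mul, abs_of_pos hpos, sub_mul,
    div_mul_cancel₀ _ hpos.ne', mul_comm]
  refine (abs_sub_le _ _ _).trans ((add_le_add hcount hsum).trans_eq ?_)
  ring

theorem stmt15 (L : ℕ) (hL : Nat.Prime L) (hmod : L % 4 = 3)
    (s : ℕ) (hs : 3 ≤ s) (i : Fin s → ZMod L) (hi : Function.Injective i)
    (b : Fin s → Bool) :
    |(Nat.card {j : ZMod L // ∀ t, (legSeq L (j + i t) ↔ b t = true)} : ℝ) -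
        (L : ℝ) / 2 ^ s| ≤ legBound L s := by
  have : Fact L.Prime := ⟨hL⟩
  have : NeZero s := ⟨by omega⟩
  have hF : ringChar (ZMod L) ≠ 2 := by rw [ZMod.ringChar_zmod_n]; omega
  simpa only [legSeq, ZMod.card, Fintype.card_fin] using stmt15_general hF i hi b
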